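/- Any singular norm F on a finite-dimensional real vector space V is the limit, uniformly on compact subsets of V, of a sequence of smooth Minkowski norms Fₙ on V. -/

import Mathlib

/-- A singular norm: continuous, nonnegative, positive on nonzero vectors,
positively homogeneous of degree one, and convex. -/
def IsSingularNorm {V : Type*} [NormedAddCommGroup V] [NormedSpace ℝ V] (F : V → ℝ) : Prop :=
  Continuous F ∧ (∀ v, 0 ≤ F v) ∧ (∀ v, v ≠ 0 → 0 < F v) ∧
    (∀ (c : ℝ), 0 ≤ c → ∀ v, F (c • v) = c * F v) ∧ ConvexOn ℝ Set.univ F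

/-- A (smooth) Minkowski norm: a singular norm that is smooth away from the origin and
whose Hessian of `F²/2` is positive definite at every nonzero point. -/
def IsMinkowskiNorm {V : Type*} [NormedAddCommGroup V] [NormedSpace ℝ V] (F : V → ℝ) : Prop :=
  IsSingularNorm F ∧ ContDiffOn ℝ (⊤ : ℕ∞) F {v : V | v ≠ 0} ∧
    ∀ v : V, v ≠ 0 → ∀ w : V, w ≠ 0 →
      0 < fderiv ℝ (fun y => fderiv ℝ (fun z => F z ^ 2 / 2) y w) v w

/-!
Fix an even mollifier `ρ` and a Minkowski norm `t`, and mollify `F` at the variable scale `t v`: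
`G v = ∫ ρ y * F (v - t v • y)`. Since `G v = t v * (ρ ⋆ F) (v / t v)` off the origin, `G` is smooth
there. For fixed `y`, `F (v + s • y) + F (v - s • y)` is sublinear in `(v, s)` and even, hence
nondecreasing in `s ≥ 0`, so substituting the sublinear `s = t v` keeps it sublinear; as `ρ` is
even, `G` is an average of such functions. Then `√(G² + t²)` is a Minkowski norm, the Hessian of
`G² / 2` being nonnegative by convexity, and it differs from `F` by at most `C * t`, with `C`
depending on `F` and `ρ` only. Let `t` shrink to zero.
-/

open Filter Topology MeasureTheory
open scoped ContDiff Convolution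

/-- A nonnegative sublinear function. Unlike a seminorm it need not be even; unlike a singular norm
it may vanish on nonzero vectors. -/
structure IsAsymmetricSeminorm {V : Type*} [AddCommGroup V] [Module ℝ V] (F : V → ℝ) : Prop where
  nonneg : ∀ v, 0 ≤ F v
  smul_of_nonneg : ∀ c : ℝ, 0 ≤ c → ∀ v, F (c • v) = c * F v
  add_le : ∀ v w, F (v + w) ≤ F v + F w

namespace IsAsymmetricSeminorm

section Algebraic

variable {V : Type*} [AddCommGroup V] [Module ℝ V] {F G : V → ℝ}

theorem of_convexOn (hnonneg : ∀ v, 0 ≤ F v)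
    (hsmul : ∀ c : ℝ, 0 ≤ c → ∀ v, F (c • v) = c * F v) (hconv : ConvexOn ℝ Set.univ F) :
    IsAsymmetricSeminorm F where
  nonneg := hnonneg
  smul_of_nonneg := hsmul
  add_le v w := by
    have hmid : F ((1 / 2 : ℝ) • (v + w)) ≤ 1 / 2 * F v + 1 / 2 * F w := by
      rw [smul_add]
      exact hconv.2 trivial trivial (by norm_num) (by norm_num) (by norm_num)
    rw [hsmul _ (by norm_num)] at hmid
    linarith

theorem map_zero (hF : IsAsymmetricSeminorm F) : F 0 = 0 := by
  simpa using hF.smul_of_nonneg 0 le_rfl 0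

theorem smul_add_smul_le (hF : IsAsymmetricSeminorm F) {a b : ℝ} (ha : 0 ≤ a) (hb : 0 ≤ b)
    (v w : V) : F (a • v + b • w) ≤ a * F v + b * F w := by
  simpa only [hF.smul_of_nonneg a ha, hF.smul_of_nonneg b hb] using hF.add_le (a • v) (b • w)

theorem convexOn (hF : IsAsymmetricSeminorm F) : ConvexOn ℝ Set.univ F :=
  ⟨convex_univ, fun v _ w _ _ _ ha hb _ => hF.smul_add_smul_le ha hb v w⟩

theorem abs_map_sub_sub_map_le (hF : IsAsymmetricSeminorm F) {C : ℝ} {w : V} (hw : F w ≤ C)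
    (hw_neg : F (-w) ≤ C) (v : V) : |F (v - w) - F v| ≤ C := by
  have hlower : F v ≤ F (v - w) + F w := by simpa using hF.add_le (v - w) w
  have hupper : F (v - w) ≤ F v + F (-w) := by simpa [sub_eq_add_neg] using hF.add_le v (-w)
  rw [abs_le]
  constructor <;> linarith

theorem add_map_sub_le_of_le (hF : IsAsymmetricSeminorm F) (v y : V) {a b : ℝ} (ha : 0 ≤ a)
    (hab : a ≤ b) : F (v + a • y) + F (v - a • y) ≤ F (v + b • y) + F (v - b • y) := by
  obtain ⟨θ, hθ0, hθ1, rfl⟩ : ∃ θ : ℝ, 0 ≤ θ ∧ θ ≤ 1 ∧ θ * b = a :=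
    ⟨a / b, div_nonneg ha (ha.trans hab), div_le_one_of_le₀ hab (ha.trans hab),
      div_mul_cancel_of_imp fun hb => le_antisymm (hb ▸ hab) ha⟩
  have hplus := hF.smul_add_smul_le (a := (1 + θ) / 2) (b := (1 - θ) / 2) (by linarith)
    (by linarith) (v + b • y) (v - b • y)
  have hminus := hF.smul_add_smul_le (a := (1 - θ) / 2) (b := (1 + θ) / 2) (by linarith)
    (by linarith) (v + b • y) (v - b • y)
  rw [show ((1 + θ) / 2) • (v + b • y) + ((1 - θ) / 2) • (v - b • y) = v + (θ * b) • y by module]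
    at hplus
  rw [show ((1 - θ) / 2) • (v + b • y) + ((1 + θ) / 2) • (v - b • y) = v - (θ * b) • y by module]
    at hminus
  linarith

theorem sqrt_sq_add_sq (hF : IsAsymmetricSeminorm F) (hG : IsAsymmetricSeminorm G) :
    IsAsymmetricSeminorm fun v => √(F v ^ 2 + G v ^ 2) where
  nonneg _ := Real.sqrt_nonneg _
  smul_of_nonneg c hc v := by
    rw [hF.smul_of_nonneg c hc, hG.smul_of_nonneg c hc, mul_pow, mul_pow, ← mul_add,
      Real.sqrt_mul (sq_nonneg c), Real.sqrt_sq hc]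
  add_le v w := by
    have hF_nonneg := hF.nonneg (v + w)
    have hG_nonneg := hG.nonneg (v + w)
    calc √(F (v + w) ^ 2 + G (v + w) ^ 2)
        ≤ √((F v + F w) ^ 2 + (G v + G w) ^ 2) := by
          gcongr
          exacts [hF.add_le v w, hG.add_le v w]
      _ ≤ √(F v ^ 2 + G v ^ 2) + √(F w ^ 2 + G w ^ 2) := by
          simp only [← Complex.norm_add_mul_I]
          refine le_of_eq_of_le (congrArg _ ?_) (norm_add_le _ _)
          push_cast
          ring

end Algebraic

section FiniteDimensional

variable {V : Type*} [NormedAddCommGroup V] [NormedSpace ℝ V] [FiniteDimensional ℝ V] {F : V → ℝ}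

theorem continuous (hF : IsAsymmetricSeminorm F) : Continuous F :=
  hF.convexOn.locallyLipschitz.continuous

theorem isSingularNorm (hF : IsAsymmetricSeminorm F) (hpos : ∀ v, v ≠ 0 → 0 < F v) :
    IsSingularNorm F :=
  ⟨hF.continuous, hF.nonneg, hpos, hF.smul_of_nonneg, hF.convexOn⟩

end FiniteDimensional

end IsAsymmetricSeminorm

theorem IsSingularNorm.isAsymmetricSeminorm {V : Type*} [NormedAddCommGroup V] [NormedSpace ℝ V]
    {F : V → ℝ} (hF : IsSingularNorm F) : IsAsymmetricSeminorm F :=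
  .of_convexOn hF.2.1 hF.2.2.2.1 hF.2.2.2.2

section Hessian

variable {V : Type*} [NormedAddCommGroup V] [NormedSpace ℝ V] {f g : V → ℝ} {v : V}

theorem differentiableAt_fderiv_apply (hf : ContDiffAt ℝ 2 f v) (w : V) :
    DifferentiableAt ℝ (fun y => fderiv ℝ f y w) v :=
  ((hf.fderiv_right (m := 1) (by norm_num)).differentiableAt (by norm_num)).clm_apply
    (differentiableAt_const w)

theorem eventually_differentiableAt (hf : ContDiffAt ℝ 2 f v) :
    ∀ᶠ y in 𝓝 v, DifferentiableAt ℝ f y :=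
  (hf.eventually (by simp)).mono fun _ hy => hy.differentiableAt (by norm_num)

theorem fderiv_fderiv_add_apply (hf : ContDiffAt ℝ 2 f v) (hg : ContDiffAt ℝ 2 g v) (w : V) :
    fderiv ℝ (fun y => fderiv ℝ (fun z => f z + g z) y w) v w =
      fderiv ℝ (fun y => fderiv ℝ f y w) v w + fderiv ℝ (fun y => fderiv ℝ g y w) v w := by
  have hfirst : (fun y => fderiv ℝ (fun z => f z + g z) y w)
      =ᶠ[𝓝 v] fun y => fderiv ℝ f y w + fderiv ℝ g y w := by
    filter_upwards [eventually_differentiableAt hf, eventually_differentiableAt hg] with y hfy hgy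
    rw [fderiv_fun_add hfy hgy, add_apply]
  rw [hfirst.fderiv_eq, fderiv_fun_add (differentiableAt_fderiv_apply hf w)
    (differentiableAt_fderiv_apply hg w), add_apply]

theorem fderiv_fderiv_apply_nonneg_of_convexOn {s : Set V} (hconv : ConvexOn ℝ s f)
    (hs : s ∈ 𝓝 v) (hf : ContDiffAt ℝ 2 f v) (w : V) :
    0 ≤ fderiv ℝ (fun y => fderiv ℝ f y w) v w := by
  obtain ⟨r, hr, hball⟩ := Metric.eventually_nhds_iff_ball.1
    ((eventually_differentiableAt hf).and hs)
  let line : ℝ →ᵃ[ℝ] V := AffineMap.lineMap v (v + w)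
  have hline (τ : ℝ) : line τ = v + τ • w := by simp [line, AffineMap.lineMap_apply, add_comm]
  let I : Set ℝ := line ⁻¹' Metric.ball v r
  have hline_deriv (τ : ℝ) : HasDerivAt line w τ := by
    simpa [line] using AffineMap.hasDerivAt_lineMap (a := v) (b := v + w) (x := τ)
  have hI : I ∈ 𝓝 (0 : ℝ) := (hline_deriv 0).continuousAt.preimage_mem_nhds
    (by simpa [hline] using Metric.ball_mem_nhds v hr)
  have hcomp_deriv : ∀ τ ∈ I, HasDerivAt (f ∘ line) (fderiv ℝ f (line τ) w) τ := fun τ hτ =>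
    (hball _ hτ).1.hasFDerivAt.comp_hasDerivAt τ (hline_deriv τ)
  have hcomp_conv : ConvexOn ℝ I (f ∘ line) :=
    (hconv.subset (fun y hy => (hball y hy).2) (convex_ball v r)).comp_affineMap line
  have hmono : MonotoneOn (fun τ => fderiv ℝ f (line τ) w) I :=
    (hcomp_conv.monotoneOn_deriv fun τ hτ => (hcomp_deriv τ hτ).differentiableAt).congr
      fun τ hτ => (hcomp_deriv τ hτ).deriv
  have hsecond : HasDerivAt (fun τ => fderiv ℝ f (line τ) w)
      (fderiv ℝ (fun y => fderiv ℝ f y w) v w) 0 := by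
    simp only [hline]
    exact (differentiableAt_fderiv_apply hf w).hasFDerivAt.hasLineDerivAt w
  rw [← hsecond.deriv, ← derivWithin_of_mem_nhds hI]
  exact hmono.derivWithin_nonneg

end Hessian

section MinkowskiNorm

variable {V : Type*} [NormedAddCommGroup V] [NormedSpace ℝ V] {t G : V → ℝ}

theorem IsMinkowskiNorm.contDiffAt (ht : IsMinkowskiNorm t) {v : V} (hv : v ≠ 0) :
    ContDiffAt ℝ ∞ t v :=
  ht.2.1.contDiffAt (isOpen_ne.mem_nhds hv)

theorem IsAsymmetricSeminorm.convexOn_sq_div_two (hG : IsAsymmetricSeminorm G) :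
    ConvexOn ℝ Set.univ fun z => G z ^ 2 / 2 :=
  ((hG.convexOn.pow (fun z _ => hG.nonneg z) 2).smul (c := (1 / 2 : ℝ)) (by norm_num)).congr
    fun z _ => by simp only [Pi.pow_apply, smul_eq_mul]; ring

theorem isMinkowskiNorm_norm_comp {E : Type*} [NormedAddCommGroup E]
    [InnerProductSpace ℝ E] (A : V →L[ℝ] E) (hA : Function.Injective A) :
    IsMinkowskiNorm fun v => ‖A v‖ := by
  have hA_ne : ∀ v, v ≠ 0 → A v ≠ 0 := fun v hv => (map_ne_zero_iff A hA).2 hv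
  have hseminorm : IsAsymmetricSeminorm fun v => ‖A v‖ :=
    { nonneg := fun _ => norm_nonneg _
      smul_of_nonneg := fun c hc v => by rw [map_smul, norm_smul, Real.norm_of_nonneg hc]
      add_le := fun v w => by rw [map_add]; exact norm_add_le _ _ }
  refine ⟨⟨A.continuous.norm, hseminorm.nonneg, fun v hv => norm_pos_iff.2 (hA_ne v hv),
    hseminorm.smul_of_nonneg, hseminorm.convexOn⟩, fun v hv =>
    (A.contDiff.contDiffAt.norm ℝ (hA_ne v hv)).contDiffWithinAt, fun v _ w hw => ?_⟩
  have hfirst (y : V) : fderiv ℝ (fun z => ‖A z‖ ^ 2 / 2) y w = inner ℝ (A w) (A y) := by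
    have hsq := (A.hasFDerivAt (x := y)).norm_sq.mul_const (1 / 2 : ℝ)
    simp only [← div_eq_mul_one_div] at hsq
    rw [hsq.fderiv]
    simp [real_inner_comm]
  have hsecond : HasFDerivAt (fun y => inner ℝ (A w) (A y)) ((innerSL ℝ (A w)).comp A) v :=
    ((innerSL ℝ (A w)).comp A).hasFDerivAt
  simp only [hfirst, hsecond.fderiv]
  exact real_inner_self_pos.2 (hA_ne w hw)

theorem IsMinkowskiNorm.sqrt_sq_add_sq [FiniteDimensional ℝ V] (ht : IsMinkowskiNorm t)
    (hG : IsAsymmetricSeminorm G) (hG_smooth : ∀ v, v ≠ 0 → ContDiffAt ℝ ∞ G v) :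
    IsMinkowskiNorm fun v => √(G v ^ 2 + t v ^ 2) := by
  have hpos : ∀ v, v ≠ 0 → 0 < G v ^ 2 + t v ^ 2 := fun v hv =>
    add_pos_of_nonneg_of_pos (sq_nonneg _) (pow_pos (ht.1.2.2.1 v hv) 2)
  refine ⟨(hG.sqrt_sq_add_sq ht.1.isAsymmetricSeminorm).isSingularNorm
    fun v hv => Real.sqrt_pos.2 (hpos v hv), fun v hv => ?_, fun v hv w hw => ?_⟩
  · exact ((((hG_smooth v hv).pow 2).add ((ht.contDiffAt hv).pow 2)).sqrt
      (hpos v hv).ne').contDiffWithinAt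
  · have hsq : (fun z => √(G z ^ 2 + t z ^ 2) ^ 2 / 2) = fun z => G z ^ 2 / 2 + t z ^ 2 / 2 := by
      funext z
      rw [Real.sq_sqrt (by positivity), add_div]
    have hsq_smooth {f : V → ℝ} (hf : ContDiffAt ℝ ∞ f v) :
        ContDiffAt ℝ 2 (fun z => f z ^ 2 / 2) v :=
      ((hf.pow 2).div_const 2).of_le (WithTop.coe_le_coe.2 (le_top : (2 : ℕ∞) ≤ ⊤))
    have hG_sq := hsq_smooth (hG_smooth v hv)
    rw [hsq, fderiv_fderiv_add_apply hG_sq (hsq_smooth (ht.contDiffAt hv))]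
    exact add_pos_of_nonneg_of_pos
      (fderiv_fderiv_apply_nonneg_of_convexOn hG.convexOn_sq_div_two univ_mem hG_sq w)
      (ht.2.2 v hv w hw)

end MinkowskiNorm

section Mollification

variable {V : Type*} [NormedAddCommGroup V] [NormedSpace ℝ V] [MeasurableSpace V]

/-- A smooth compactly supported probability density. It is required to be even so that mollifying
at a scale which varies from point to point still preserves sublinearity. -/
structure IsEvenMollifier (μ : Measure V) (ρ : V → ℝ) : Prop where
  contDiff : ContDiff ℝ ∞ ρ
  hasCompactSupport : HasCompactSupport ρ
  nonneg : ∀ y, 0 ≤ ρ y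
  map_neg : ∀ y, ρ (-y) = ρ y
  integral_eq_one : ∫ y, ρ y ∂μ = 1

/-- The mollification of `F` by `ρ` at the point-dependent scale `t`. -/
noncomputable def variableMollification (μ : Measure V) (ρ t F : V → ℝ) (v : V) : ℝ :=
  ∫ y, ρ y * F (v - t v • y) ∂μ

variable {μ : Measure V} {ρ t F : V → ℝ}

theorem variableMollification_eq_mul_convolution
    (hF : ∀ c : ℝ, 0 ≤ c → ∀ v, F (c • v) = c * F v) {v : V} (htv : 0 < t v) :
    variableMollification μ ρ t F v =
      t v * (ρ ⋆[ContinuousLinearMap.lsmul ℝ ℝ, μ] F) ((t v)⁻¹ • v) := by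
  simp only [variableMollification, convolution_def, ContinuousLinearMap.lsmul_apply, smul_eq_mul]
  rw [← integral_const_mul]
  refine integral_congr_ae (.of_forall fun y => ?_)
  have hpoint : v - t v • y = t v • ((t v)⁻¹ • v - y) := by
    rw [smul_sub, smul_inv_smul₀ htv.ne']
  simp only [hpoint, hF _ htv.le]
  ring

variable [BorelSpace V]

theorem exists_isEvenMollifier [FiniteDimensional ℝ V] (μ : Measure V) [μ.IsAddHaarMeasure] :
    ∃ ρ : V → ℝ, IsEvenMollifier μ ρ := by
  let φ : ContDiffBump (0 : V) := default
  exact ⟨φ.normed μ, φ.contDiff_normed, φ.hasCompactSupport_normed, φ.nonneg_normed,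
    φ.normed_neg, φ.integral_normed⟩

theorem IsEvenMollifier.integrable_mul [IsFiniteMeasureOnCompacts μ] (hρ : IsEvenMollifier μ ρ)
    {f : V → ℝ} (hf : Continuous f) : Integrable (fun y => ρ y * f y) μ :=
  (hρ.contDiff.continuous.mul hf).integrable_of_hasCompactSupport hρ.hasCompactSupport.mul_right

theorem IsEvenMollifier.integral_mul_comp_neg [μ.IsNegInvariant] (hρ : IsEvenMollifier μ ρ)
    (f : V → ℝ) : ∫ y, ρ y * f (-y) ∂μ = ∫ y, ρ y * f y ∂μ := by
  simpa only [hρ.map_neg] using integral_neg_eq_self (fun y => ρ y * f y) μ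

theorem two_mul_variableMollification [IsFiniteMeasureOnCompacts μ] [μ.IsNegInvariant]
    (hρ : IsEvenMollifier μ ρ) (hF : Continuous F) (v : V) :
    2 * variableMollification μ ρ t F v =
      ∫ y, ρ y * (F (v + t v • y) + F (v - t v • y)) ∂μ := by
  have hreflect : ∫ y, ρ y * F (v + t v • y) ∂μ = variableMollification μ ρ t F v := by
    simpa only [smul_neg, sub_neg_eq_add, variableMollification] using
      hρ.integral_mul_comp_neg fun y => F (v - t v • y)
  simp only [mul_add]
  rw [integral_add (hρ.integrable_mul (by fun_prop)) (hρ.integrable_mul (by fun_prop)), hreflect,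
    variableMollification, two_mul]

theorem isAsymmetricSeminorm_variableMollification [FiniteDimensional ℝ V]
    [IsFiniteMeasureOnCompacts μ] [μ.IsNegInvariant] (hF : IsAsymmetricSeminorm F)
    (ht : IsAsymmetricSeminorm t) (hρ : IsEvenMollifier μ ρ) :
    IsAsymmetricSeminorm (variableMollification μ ρ t F) where
  nonneg v := integral_nonneg fun y => mul_nonneg (hρ.nonneg y) (hF.nonneg _)
  smul_of_nonneg c hc v := by
    simp only [variableMollification, ht.smul_of_nonneg c hc, mul_smul, ← smul_sub,
      hF.smul_of_nonneg c hc, mul_left_comm _ c, integral_const_mul]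
  add_le v w := by
    have hF_cont := hF.continuous
    have hpointwise (y : V) :
        F (v + w + t (v + w) • y) + F (v + w - t (v + w) • y) ≤
          (F (v + t v • y) + F (v - t v • y)) + (F (w + t w • y) + F (w - t w • y)) := by
      have hscale := hF.add_map_sub_le_of_le (v + w) y (ht.nonneg _) (ht.add_le v w)
      have hplus := hF.add_le (v + t v • y) (w + t w • y)
      have hminus := hF.add_le (v - t v • y) (w - t w • y)
      rw [show v + t v • y + (w + t w • y) = v + w + (t v + t w) • y by module] at hplus
      rw [show v - t v • y + (w - t w • y) = v + w - (t v + t w) • y by module] at hminus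
      linarith
    have hdouble := integral_mono (μ := μ) (hρ.integrable_mul (by fun_prop))
      (hρ.integrable_mul (by fun_prop))
      fun y => mul_le_mul_of_nonneg_left (hpointwise y) (hρ.nonneg y)
    simp only [mul_add (ρ _) (_ + _) (_ + _)] at hdouble
    rw [integral_add (hρ.integrable_mul (by fun_prop)) (hρ.integrable_mul (by fun_prop)),
      ← two_mul_variableMollification hρ hF_cont, ← two_mul_variableMollification hρ hF_cont,
      ← two_mul_variableMollification hρ hF_cont] at hdouble
    linarith

theorem contDiffAt_variableMollification [FiniteDimensional ℝ V] [μ.IsAddHaarMeasure]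
    (hρ : IsEvenMollifier μ ρ) (hF : IsAsymmetricSeminorm F) {v : V}
    (ht : ContDiffAt ℝ ∞ t v) (htv : 0 < t v) :
    ContDiffAt ℝ ∞ (variableMollification μ ρ t F) v := by
  have hsmooth : ContDiff ℝ ∞ (ρ ⋆[ContinuousLinearMap.lsmul ℝ ℝ, μ] F) :=
    hρ.hasCompactSupport.contDiff_convolution_left _ hρ.contDiff hF.continuous.locallyIntegrable
  have hscaled : ContDiffAt ℝ ∞ (fun u => (t u)⁻¹ • u) v := (ht.inv htv.ne').smul contDiffAt_id
  refine (ht.mul (hsmooth.contDiffAt.comp v hscaled)).congr_of_eventuallyEq ?_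
  filter_upwards [ht.continuousAt.eventually (lt_mem_nhds htv)] with u htu
  exact variableMollification_eq_mul_convolution hF.smul_of_nonneg htu

theorem abs_variableMollification_sub_le [FiniteDimensional ℝ V] [IsFiniteMeasureOnCompacts μ]
    (hρ : IsEvenMollifier μ ρ) (hF : IsAsymmetricSeminorm F) {C : ℝ} (hC : ∀ y, ρ y ≠ 0 → F y ≤ C)
    {v : V} (htv : 0 ≤ t v) : |variableMollification μ ρ t F v - F v| ≤ C * t v := by
  have hF_cont := hF.continuous
  have hconst (a : ℝ) : ∫ y, ρ y * a ∂μ = a := by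
    rw [integral_mul_const, hρ.integral_eq_one, one_mul]
  have hdiff : variableMollification μ ρ t F v - F v =
      ∫ y, ρ y * (F (v - t v • y) - F v) ∂μ := by
    simp only [mul_sub]
    rw [integral_sub (hρ.integrable_mul (by fun_prop)) (hρ.integrable_mul (by fun_prop)), hconst,
      variableMollification]
  have hpointwise (y : V) : ‖ρ y * (F (v - t v • y) - F v)‖ ≤ ρ y * (C * t v) := by
    rw [norm_mul, Real.norm_of_nonneg (hρ.nonneg y)]
    by_cases hy : ρ y = 0
    · simp [hy]
    have hbound (z : V) (hz : ρ z ≠ 0) : F (t v • z) ≤ C * t v := by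
      rw [hF.smul_of_nonneg _ htv, mul_comm]
      exact mul_le_mul_of_nonneg_right (hC z hz) htv
    refine mul_le_mul_of_nonneg_left (hF.abs_map_sub_sub_map_le (hbound y hy) ?_ v) (hρ.nonneg y)
    rw [← smul_neg]
    exact hbound (-y) (by rwa [hρ.map_neg])
  rw [hdiff, ← hconst (C * t v)]
  exact norm_integral_le_of_norm_le (hρ.integrable_mul continuous_const) (.of_forall hpointwise)

end Mollification

theorem abs_sqrt_sq_add_sq_sub_le {x y : ℝ} (hx : 0 ≤ x) (hy : 0 ≤ y) :
    |√(x ^ 2 + y ^ 2) - x| ≤ y := by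
  have hlower : x ≤ √(x ^ 2 + y ^ 2) := Real.le_sqrt_of_sq_le (by nlinarith)
  have hupper : √(x ^ 2 + y ^ 2) ≤ x + y :=
    Real.sqrt_le_iff.2 ⟨add_nonneg hx hy, by nlinarith [mul_nonneg hx hy]⟩
  rw [abs_of_nonneg (sub_nonneg.2 hlower)]
  linarith

theorem tendstoUniformlyOn_of_abs_sub_le_mul {ι X : Type*} {l : Filter ι} {f : ι → X → ℝ}
    {f₀ g : X → ℝ} {δ : ι → ℝ} {K : Set X} (hg : BddAbove (g '' K)) (hδ_nonneg : ∀ i, 0 ≤ δ i)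
    (hδ : Tendsto δ l (𝓝 0)) (hle : ∀ i, ∀ x ∈ K, |f i x - f₀ x| ≤ δ i * g x) :
    TendstoUniformlyOn f f₀ l K := by
  obtain ⟨M, hM⟩ := hg
  have hlim : Tendsto (fun i => δ i * M) l (𝓝 0) := by simpa using hδ.mul_const M
  rw [Metric.tendstoUniformlyOn_iff]
  intro ε hε
  filter_upwards [hlim.eventually (gt_mem_nhds hε)] with i hi x hx
  rw [dist_comm, Real.dist_eq]
  calc |f i x - f₀ x| ≤ δ i * g x := hle i x hx
    _ ≤ δ i * M := mul_le_mul_of_nonneg_left (hM ⟨x, hx, rfl⟩) (hδ_nonneg i)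
    _ < ε := hi

section Approximation

variable {V : Type*} [NormedAddCommGroup V] [NormedSpace ℝ V] [FiniteDimensional ℝ V] {F : V → ℝ}

theorem IsAsymmetricSeminorm.exists_isMinkowskiNorm_abs_sub_le (hF : IsAsymmetricSeminorm F) :
    ∃ C : ℝ, ∀ t : V → ℝ, IsMinkowskiNorm t →
      ∃ F' : V → ℝ, IsMinkowskiNorm F' ∧ ∀ v, |F' v - F v| ≤ C * t v := by
  borelize V
  let μ : Measure V := Measure.addHaar
  obtain ⟨ρ, hρ⟩ := exists_isEvenMollifier μ
  obtain ⟨C, hC⟩ := hρ.hasCompactSupport.bddAbove_image hF.continuous.continuousOn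
  refine ⟨1 + C, fun t ht => ?_⟩
  let G := variableMollification μ ρ t F
  have ht_seminorm := ht.1.isAsymmetricSeminorm
  have hG : IsAsymmetricSeminorm G := isAsymmetricSeminorm_variableMollification hF ht_seminorm hρ
  have hG_smooth (v : V) (hv : v ≠ 0) : ContDiffAt ℝ ∞ G v :=
    contDiffAt_variableMollification hρ hF (ht.contDiffAt hv) (ht.1.2.2.1 v hv)
  refine ⟨fun v => √(G v ^ 2 + t v ^ 2), ht.sqrt_sq_add_sq hG hG_smooth, fun v => ?_⟩
  calc |√(G v ^ 2 + t v ^ 2) - F v|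
      ≤ |√(G v ^ 2 + t v ^ 2) - G v| + |G v - F v| := abs_sub_le _ _ _
    _ ≤ t v + C * t v :=
        add_le_add (abs_sqrt_sq_add_sq_sub_le (hG.nonneg v) (ht_seminorm.nonneg v))
          (abs_variableMollification_sub_le hρ hF
            (fun y hy => hC ⟨y, subset_tsupport ρ hy, rfl⟩) (ht_seminorm.nonneg v))
    _ = (1 + C) * t v := by ring

theorem stmt_4_general (hF : IsAsymmetricSeminorm F) :
    ∃ Fn : ℕ → V → ℝ, (∀ n, IsMinkowskiNorm (Fn n)) ∧
      ∀ K : Set V, IsCompact K → TendstoUniformlyOn Fn F atTop K := by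
  obtain ⟨C, happrox⟩ := hF.exists_isMinkowskiNorm_abs_sub_le
  let A := toEuclidean (E := V)
  let c (n : ℕ) : ℝ := 1 / ((n : ℝ) + 1)
  have hc (n : ℕ) : 0 < c n := Nat.one_div_pos_of_nat
  have hscaled (n : ℕ) : IsMinkowskiNorm fun v => ‖(c n • A.toContinuousLinearMap) v‖ :=
    isMinkowskiNorm_norm_comp _ ((smul_right_injective _ (hc n).ne').comp A.injective)
  choose Fn hFn hle using fun n => happrox _ (hscaled n)
  refine ⟨Fn, hFn, fun K hK => ?_⟩
  have hbdd : BddAbove ((fun v => C * ‖A v‖) '' K) := hK.bddAbove_image (by fun_prop)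
  refine tendstoUniformlyOn_of_abs_sub_le_mul hbdd (fun n => (hc n).le)
    tendsto_one_div_add_atTop_nhds_zero_nat fun n v _ => (hle n v).trans_eq ?_
  rw [smul_apply, norm_smul, Real.norm_of_nonneg (hc n).le,
    ContinuousLinearEquiv.coe_coe, mul_left_comm]

end Approximation

/-- Any singular norm on a finite-dimensional real vector space is the limit, uniformly on
compact sets, of a sequence of smooth Minkowski norms. -/
theorem stmt_4 {V : Type*} [NormedAddCommGroup V] [NormedSpace ℝ V] [FiniteDimensional ℝ V]
    (F : V → ℝ) (hF : IsSingularNorm F) :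
    ∃ Fn : ℕ → V → ℝ, (∀ n, IsMinkowskiNorm (Fn n)) ∧
      ∀ K : Set V, IsCompact K → TendstoUniformlyOn Fn F Filter.atTop K :=
  stmt_4_general hF.isAsymmetricSeminorm
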